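/- arXiv:1211.3716 — 3 statements merged into one kernel-verified Lean document; each statement's English description precedes it below -/
import Mathlib

section
/- There exists a universal constant C < ∞ such that the following holds for every λ ∈ (0,1) and every finitely supported f : ℤ₊ → ℝ. Define Ā f : ℤ₊² → ℝ by (Ā f)(y₁,y₂) = 1_{y₁=0, y₂>0} ( f(y₂) − f(y₂−1) ) + 1_{y₂=0} ( f(y₁) − f(y₁+1) ). Then sup over finitely supported q : ℤ₊² → ℝ of [ 2⟨Ā f, q⟩ − λ Σ q² − 𝓔₂(q) ] ≤ C · λ^{−1/2} · ∫_{−π}^{π} t² |F̂(t)|² dt, where F : ℤ → ℝ is given by F(x) = f(x) for x ≥ 0 and F(x) = f(−x−1) for x < 0, and F̂(t) = Σ_{x ∈ ℤ} F(x) e^{itx}. Equivalently, ⟨Ā f, (λ − S₀)⁻¹ Ā f⟩ ≤ C λ^{−1/2} ∫ t² |F̂(t)|² dt, where S₀ is the generator with Dirichlet form 𝓔₂. -/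
/-!
Summation along a half line gives, for a finitely supported sequence `a` and `s > 0`, the trace
inequality `s a₀² ≤ ½ ∑ (a_{n+1} - a_n)² + 2 s² ∑ a_n²` (`trace_ineq`). With `s = √λ`, applied to
every row and every column of the quarter plane, it controls `√λ` times the squared `ℓ²` norm of
`q` on the two axes by the Dirichlet form (only the edges in the directions `e₁` and `e₂` are
needed) plus `λ ‖q‖²`.

The function `Ā f` lives on the two axes, where it equals `±` the discrete gradient of `f`, so
Cauchy-Schwarz with weight `√λ` bounds `2 ⟨Ā f, q⟩` by that quantity plus `8 λ^{-1/2} ‖∇F‖²`, where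
`∇F(x) = F(x) - F(x-1)` (`box_ineq`). The extension `F` has no jump between `-1` and `0`.

Finally `2π ‖∇F‖² = ∫ |1 - e^{it}|² |F̂(t)|² dt ≤ ∫ t² |F̂(t)|² dt` by Parseval
(`grad_le_integral`).
-/

/-- The `j`-th move vector of the dimension-reduced exclusion walk on `ℤ₊^m`:
`e₁, e₂-e₁, …, e_m-e_{m-1}, -e_m` (0-indexed); together with their negatives these
form the list `V_m`. -/
def stepVec (m : ℕ) (j : Fin (m + 1)) : Fin m → ℤ :=
  fun i => (if (i : ℕ) = (j : ℕ) then 1 else 0) - (if (i : ℕ) + 1 = (j : ℕ) then 1 else 0)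

/-- The move `v` is allowed at `y ∈ ℤ₊^m` iff `y + v` stays in `ℤ₊^m`. -/
def okMove {m : ℕ} (v : Fin m → ℤ) (y : Fin m → ℕ) : Prop :=
  ∀ i, 0 ≤ (y i : ℤ) + v i

instance {m : ℕ} (v : Fin m → ℤ) (y : Fin m → ℕ) : Decidable (okMove v y) := by
  unfold okMove; infer_instance

/-- The result `y + v` of an allowed move. -/
def moveTo {m : ℕ} (v : Fin m → ℤ) (y : Fin m → ℕ) : Fin m → ℕ :=
  fun i => ((y i : ℤ) + v i).toNat

/-- The exclusion Dirichlet form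
`𝓔_m(f) = (1/2) Σ_{y ∈ ℤ₊^m} Σ_{v ∈ V_m} [y+v ∈ ℤ₊^m] (f(y+v) - f(y))²`. -/
noncomputable def exclDirichlet (m : ℕ) (f : (Fin m → ℕ) → ℝ) : ℝ :=
  (1 / 2) * ∑ᶠ y : Fin m → ℕ, ∑ j : Fin (m + 1), ∑ ε ∈ ({1, -1} : Finset ℤ),
    (if okMove (ε • stepVec m j) y then (f (moveTo (ε • stepVec m j) y) - f y) ^ 2 else 0)

/-- The symmetric extension `F(x) = f(x)` for `x ≥ 0`, `F(x) = f(-x-1)` for `x < 0`. -/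
noncomputable def symmExt (f : ℕ → ℝ) (x : ℤ) : ℝ :=
  if 0 ≤ x then f x.toNat else f (-x - 1).toNat

/-- The Fourier transform `F̂(t) = Σ_{x ∈ ℤ} F(x) e^{itx}` of a finitely supported
function on `ℤ`. -/
noncomputable def fourierZ (F : ℤ → ℝ) (t : ℝ) : ℂ :=
  ∑ᶠ x : ℤ, (F x : ℂ) * Complex.exp (Complex.I * (t : ℂ) * (x : ℂ))

/-- The dimension-reduced degree-raising TASEP operator applied to a degree-two test
function: `(Ā f)(y₁,y₂) = 1_{y₁=0,y₂>0}(f(y₂)-f(y₂-1)) + 1_{y₂=0}(f(y₁)-f(y₁+1))`. -/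
noncomputable def Abar (f : ℕ → ℝ) (y : Fin 2 → ℕ) : ℝ :=
  (if y 0 = 0 ∧ 0 < y 1 then f (y 1) - f (y 1 - 1) else 0) +
  (if y 1 = 0 then f (y 0) - f (y 0 + 1) else 0)

open MeasureTheory Finset

/-- One-dimensional trace inequality with weight `s`; the boundary terms at `M` make it inductive
and vanish when `a M = 0`. -/
lemma trace_ineq (a : ℕ → ℝ) (s : ℝ) (M : ℕ) :
    s * (a 0 ^ 2 - a M ^ 2) ≤ 1 / 2 * ∑ n ∈ range M, (a (n + 1) - a n) ^ 2
      + 2 * s ^ 2 * ∑ n ∈ range M, a n ^ 2 + s ^ 2 * a M ^ 2 := by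
  induction M with
  | zero => simp; positivity
  | succ M ih =>
    rw [sum_range_succ, sum_range_succ]
    nlinarith [sq_nonneg ((a (M + 1) - a M) + s * (a (M + 1) + a M)),
      sq_nonneg (s * (a (M + 1) - a M))]

lemma integral_cos_int (n : ℤ) :
    ∫ t in (-Real.pi)..Real.pi, Real.cos (n * t) = if n = 0 then 2 * Real.pi else 0 := by
  split_ifs with h
  · subst h; simp; ring
  · have h' : (n : ℝ) ≠ 0 := by exact_mod_cast h
    rw [intervalIntegral.integral_comp_mul_left (fun t => Real.cos t) h', integral_cos]
    simp [Real.sin_int_mul_pi]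

/-- Parseval's identity for trigonometric polynomials with real coefficients. -/
lemma parseval_finset (S : Finset ℤ) (a : ℤ → ℝ) :
    ∫ t in (-Real.pi)..Real.pi, ‖∑ x ∈ S, (a x : ℂ) * Complex.exp (Complex.I * t * x)‖ ^ 2
      = 2 * Real.pi * ∑ x ∈ S, a x ^ 2 := by
  have key : ∀ t : ℝ, ‖∑ x ∈ S, (a x : ℂ) * Complex.exp (Complex.I * t * x)‖ ^ 2
      = ∑ x ∈ S, ∑ y ∈ S, a x * a y * Real.cos (((x - y : ℤ) : ℝ) * t) := by
    intro t
    have e : ∀ x : ℤ, Complex.exp (Complex.I * t * x)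
        = (Real.cos (x * t) : ℂ) + (Real.sin (x * t) : ℂ) * Complex.I := by
      intro x
      rw [Complex.ofReal_cos, Complex.ofReal_sin, ← Complex.exp_mul_I]
      congr 1; push_cast; ring
    rw [← Complex.normSq_eq_norm_sq, Complex.normSq_apply]
    simp only [e, Complex.re_sum, Complex.im_sum, Complex.mul_re, Complex.mul_im, Complex.add_re,
      Complex.add_im, Complex.ofReal_re, Complex.ofReal_im, Complex.I_re, Complex.I_im, mul_zero,
      zero_mul, mul_one, sub_zero, add_zero, zero_add]
    rw [sum_mul_sum, sum_mul_sum, ← sum_add_distrib]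
    refine sum_congr rfl fun x _ => ?_
    rw [← sum_add_distrib]
    refine sum_congr rfl fun y _ => ?_
    push_cast
    rw [sub_mul, Real.cos_sub]; ring
  simp_rw [key]
  rw [intervalIntegral.integral_finsetSum
    (fun x _ => Continuous.intervalIntegrable (by fun_prop) _ _)]
  rw [mul_sum]
  refine sum_congr rfl fun x hx => ?_
  rw [intervalIntegral.integral_finsetSum
    (fun y _ => Continuous.intervalIntegrable (by fun_prop) _ _)]
  simp_rw [intervalIntegral.integral_const_mul, integral_cos_int, sub_eq_zero]
  rw [sum_eq_single x]
  · simp; ring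
  · intro y _ hy; simp [Ne.symm hy]
  · intro h; exact absurd hx h

/-- Parseval applied to the gradient of `F`, with `|1 - e^{it}| ≤ |t|`. -/
lemma grad_le_integral (F : ℤ → ℝ) (S : Finset ℤ)
    (h0 : ∀ x, F x ≠ 0 → x ∈ S) (h1 : ∀ x, F x ≠ 0 → x + 1 ∈ S) :
    2 * Real.pi * ∑ x ∈ S, (F x - F (x - 1)) ^ 2
      ≤ ∫ t in (-Real.pi)..Real.pi, t ^ 2 * ‖fourierZ F t‖ ^ 2 := by
  have hF : ∀ t : ℝ, fourierZ F t = ∑ x ∈ S, (F x : ℂ) * Complex.exp (Complex.I * t * x) := by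
    intro t
    refine finsum_eq_sum_of_support_subset _ fun x hx => ?_
    refine h0 x fun h => hx ?_
    simp [h]
  have hG : ∀ t : ℝ, ∑ x ∈ S, ((F x - F (x - 1) : ℝ) : ℂ) * Complex.exp (Complex.I * t * x)
      = (1 - Complex.exp (Complex.I * t)) * fourierZ F t := by
    intro t
    have hs : ∑ x ∈ S, (F (x - 1) : ℂ) * Complex.exp (Complex.I * t * x)
        = ∑ᶠ x : ℤ, (F (x - 1) : ℂ) * Complex.exp (Complex.I * t * x) := by
      refine (finsum_eq_sum_of_support_subset _ fun x hx => ?_).symm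
      have := h1 (x - 1) fun h => hx (by simp [h])
      simpa using this
    rw [← finsum_comp_equiv (Equiv.addRight (1 : ℤ))] at hs
    rw [finsum_eq_sum_of_support_subset (s := S) _ ?_] at hs
    · simp_rw [Complex.ofReal_sub, sub_mul]
      rw [sum_sub_distrib, hs, hF, one_mul, mul_sum]
      congr 1
      refine sum_congr rfl fun x _ => ?_
      simp only [Equiv.coe_addRight, add_sub_cancel_right]
      rw [mul_left_comm, ← Complex.exp_add]
      congr 2; push_cast; ring
    · intro x hx
      refine h0 x fun h => hx ?_
      simp [h]
  rw [← parseval_finset]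
  refine intervalIntegral.integral_mono_on (by linarith [Real.pi_pos])
    (Continuous.intervalIntegrable (by fun_prop) _ _) ?_ fun t _ => ?_
  · simp_rw [hF]
    exact Continuous.intervalIntegrable (by fun_prop) _ _
  · rw [hG, norm_mul, mul_pow]
    rw [← sq_abs t]
    gcongr
    rw [norm_sub_rev]
    simpa using Real.norm_exp_I_mul_ofReal_sub_one_le (x := t)

/-- A finitary sum over `ℤ₊²` of a function vanishing outside the box `[0, M)²`. -/
lemma finsum_box (g : (Fin 2 → ℕ) → ℝ) (M : ℕ)
    (hg : ∀ y, g y ≠ 0 → y 0 < M ∧ y 1 < M) :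
    ∑ᶠ y, g y = ∑ n ∈ range M, ∑ m ∈ range M, g ![n, m] := by
  rw [← finsum_comp_equiv (finTwoArrowEquiv ℕ).symm,
    finsum_eq_sum_of_support_subset (s := range M ×ˢ range M), sum_product]
  · rfl
  · rintro ⟨n, m⟩ h
    have := hg _ h
    simpa [finTwoArrowEquiv] using this

/-- The Dirichlet form dominates half of the edges in the directions `e₁` and `e₂`; here `q` is
supported in `[0, M)²`. -/
lemma dirichlet_ge (q : (Fin 2 → ℕ) → ℝ) (M : ℕ) (hq : ∀ y, q y ≠ 0 → y 0 < M ∧ y 1 < M) :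
    1 / 2 * ∑ n ∈ range (M + 1), ∑ m ∈ range (M + 1),
      ((q ![n + 1, m] - q ![n, m]) ^ 2 + (q ![n, m + 1] - q ![n, m]) ^ 2) ≤ exclDirichlet 2 q := by
  have e : ∀ y : Fin 2 → ℕ, (∑ j : Fin 3, ∑ ε ∈ ({1, -1} : Finset ℤ),
      (if okMove (ε • stepVec 2 j) y then (q (moveTo (ε • stepVec 2 j) y) - q y) ^ 2 else 0)) ≠ 0 →
      y 0 < M + 1 ∧ y 1 < M + 1 := by
    intro y hy
    by_contra hcon
    refine hy (sum_eq_zero fun j _ => sum_eq_zero fun ε hε => ?_)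
    rw [ite_eq_right_iff]
    intro hok
    have z0 : q y = 0 := by
      by_contra h
      have := hq y h
      omega
    have z1 : q (moveTo (ε • stepVec 2 j) y) = 0 := by
      by_contra h
      have h2 := hq _ h
      have k0 := hok 0
      have k1 := hok 1
      simp only [moveTo, stepVec, Pi.smul_apply, smul_eq_mul] at h2 k0 k1
      simp only [mem_insert, mem_singleton] at hε
      rcases hε with rfl | rfl <;> fin_cases j <;> simp at h2 k0 k1 <;> omega
    rw [z0, z1, sub_zero, zero_pow two_ne_zero]
  unfold exclDirichlet
  rw [finsum_box _ _ e]
  gcongr with n _ m _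
  have s0 : okMove ((1 : ℤ) • stepVec 2 0) ![n, m] := by
    intro i; fin_cases i <;> simp [stepVec]; omega
  have s2 : okMove ((-1 : ℤ) • stepVec 2 2) ![n, m] := by
    intro i; fin_cases i <;> simp [stepVec]; omega
  have t0 : moveTo ((1 : ℤ) • stepVec 2 0) ![n, m] = ![n + 1, m] := by
    ext i; fin_cases i <;> simp [moveTo, stepVec]
  have t2 : moveTo ((-1 : ℤ) • stepVec 2 2) ![n, m] = ![n, m + 1] := by
    ext i; fin_cases i <;> simp [moveTo, stepVec]
  have nn : ∀ v : Fin 2 → ℤ,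
      0 ≤ if okMove v ![n, m] then (q (moveTo v ![n, m]) - q ![n, m]) ^ 2 else 0 := by
    intro v; split_ifs <;> positivity
  rw [Fin.sum_univ_three]
  simp only [sum_pair (show (1 : ℤ) ≠ -1 by decide)]
  rw [if_pos s0, if_pos s2, t0, t2]
  have h1 := nn ((-1 : ℤ) • stepVec 2 0)
  have h2 := nn ((1 : ℤ) • stepVec 2 1)
  have h3 := nn ((-1 : ℤ) • stepVec 2 1)
  have h4 := nn ((1 : ℤ) • stepVec 2 2)
  linarith

/-- The two axis sums `∑ c(m) q(0,m)` and `∑ c'(n) q(n,0)` are bounded by Cauchy-Schwarz and the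
trace inequality in each row and column. -/
lemma box_ineq (Q : ℕ → ℕ → ℝ) (c c' : ℕ → ℝ) (s : ℝ) (hs : 0 < s) (M : ℕ)
    (h0 : ∀ m, Q M m = 0) (h1 : ∀ n, Q n M = 0) :
    2 * (∑ m ∈ range M, c m * Q 0 m + ∑ n ∈ range M, c' n * Q n 0)
      ≤ 4 * s⁻¹ * (∑ m ∈ range M, c m ^ 2 + ∑ n ∈ range M, c' n ^ 2)
        + s ^ 2 * ∑ n ∈ range M, ∑ m ∈ range M, Q n m ^ 2
        + 1 / 2 * ∑ n ∈ range M, ∑ m ∈ range M,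
          ((Q (n + 1) m - Q n m) ^ 2 + (Q n (m + 1) - Q n m) ^ 2) := by
  have young : ∀ a b : ℝ, 2 * (a * b) ≤ 4 * s⁻¹ * a ^ 2 + 1 / 4 * (s * b ^ 2) := by
    intro a b
    have : 4 * s⁻¹ * a ^ 2 + 1 / 4 * (s * b ^ 2) - 2 * (a * b) = s⁻¹ * (2 * a - s * b / 2) ^ 2 := by
      field_simp; ring
    have : 0 ≤ s⁻¹ * (2 * a - s * b / 2) ^ 2 := by positivity
    linarith
  have A : ∑ m ∈ range M, 2 * (c m * Q 0 m) ≤ ∑ m ∈ range M, (4 * s⁻¹ * c m ^ 2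
      + 1 / 4 * (1 / 2 * ∑ n ∈ range M, (Q (n + 1) m - Q n m) ^ 2
        + 2 * s ^ 2 * ∑ n ∈ range M, Q n m ^ 2)) := by
    refine sum_le_sum fun m _ => ?_
    have := trace_ineq (fun n => Q n m) s M
    simp only [h0] at this
    linarith [young (c m) (Q 0 m)]
  have B : ∑ n ∈ range M, 2 * (c' n * Q n 0) ≤ ∑ n ∈ range M, (4 * s⁻¹ * c' n ^ 2
      + 1 / 4 * (1 / 2 * ∑ m ∈ range M, (Q n (m + 1) - Q n m) ^ 2
        + 2 * s ^ 2 * ∑ m ∈ range M, Q n m ^ 2)) := by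
    refine sum_le_sum fun n _ => ?_
    have := trace_ineq (fun m => Q n m) s M
    simp only [h1] at this
    linarith [young (c' n) (Q n 0)]
  simp only [sum_add_distrib, ← mul_sum] at A B ⊢
  rw [sum_comm (f := fun m n => (Q (n + 1) m - Q n m) ^ 2), sum_comm (f := fun m n => Q n m ^ 2)] at A
  have p1 : 0 ≤ ∑ n ∈ range M, ∑ m ∈ range M, (Q (n + 1) m - Q n m) ^ 2 := by positivity
  have p2 : 0 ≤ ∑ n ∈ range M, ∑ m ∈ range M, (Q n (m + 1) - Q n m) ^ 2 := by positivity
  linarith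

/-- **Hard-core removal, `H₋₁` bound for the degree-raising part:**
`sup_q [2⟨Āf,q⟩ - λ‖q‖² - 𝓔₂(q)] ≤ C λ^{-1/2} ∫_{-π}^{π} t² |F̂(t)|² dt`. -/
theorem H_neg_one_bound_degree_raising :
    ∃ C : ℝ, ∀ lam : ℝ, lam ∈ Set.Ioo (0 : ℝ) 1 →
      ∀ f : ℕ → ℝ, (Function.support f).Finite →
        ∀ q : (Fin 2 → ℕ) → ℝ, (Function.support q).Finite →
          2 * (∑ᶠ y : Fin 2 → ℕ, Abar f y * q y)
              - lam * ∑ᶠ y : Fin 2 → ℕ, (q y) ^ 2 - exclDirichlet 2 q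
            ≤ C * lam ^ (-(1 / 2) : ℝ) *
                ∫ t in (-Real.pi)..Real.pi, t ^ 2 * ‖fourierZ (symmExt f) t‖ ^ 2 := by
  refine ⟨8, fun lam hlam f hf q hq => ?_⟩
  obtain ⟨hl, -⟩ := hlam
  -- A single `N` with `f` supported in `[0, N]` and `q` supported in `[0, N]²`.
  obtain ⟨N, hNf, hNq⟩ : ∃ N : ℕ, (∀ k, f k ≠ 0 → k ≤ N) ∧
      ∀ y, q y ≠ 0 → y 0 < N + 1 ∧ y 1 < N + 1 := by
    obtain ⟨A, hA⟩ := hf.bddAbove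
    obtain ⟨B, hB⟩ := hq.bddAbove
    refine ⟨A + B 0 + B 1, fun k hk => ?_, fun y hy => ?_⟩
    · have := hA (show k ∈ Function.support f from hk); omega
    · have := hB (show y ∈ Function.support q from hy)
      have a0 : y 0 ≤ B 0 := this 0
      have a1 : y 1 ≤ B 1 := this 1
      omega
  set M := N + 1 + 1 with hM
  set F := symmExt f with hF
  set S : Finset ℤ := Icc (-(M : ℤ)) M with hS
  set s := Real.sqrt lam with hs
  have hs0 : 0 < s := Real.sqrt_pos.2 hl
  have hs2 : s ^ 2 = lam := Real.sq_sqrt hl.le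
  have hpow : lam ^ (-(1 / 2) : ℝ) = s⁻¹ := by
    rw [Real.rpow_neg hl.le, hs, Real.sqrt_eq_rpow]
  have hsupp : ∀ x, F x ≠ 0 → -(N : ℤ) - 1 ≤ x ∧ x ≤ N := by
    intro x hx
    rw [hF, symmExt] at hx
    split_ifs at hx with h <;> have := hNf _ hx <;> omega
  have hgrad := grad_le_integral F S
    (fun x hx => by have := hsupp x hx; rw [hS, mem_Icc]; omega)
    (fun x hx => by have := hsupp x hx; rw [hS, mem_Icc]; omega)
  set D := ∑ x ∈ S, (F x - F (x - 1)) ^ 2 with hD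
  have hD0 : 0 ≤ D := by positivity
  set c : ℕ → ℝ := fun m => if 0 < m then f m - f (m - 1) else 0 with hc
  set c' : ℕ → ℝ := fun n => f n - f (n + 1) with hc'
  have hFn : ∀ n : ℕ, F n = f n := fun n => by simp [hF, symmExt]
  have hcD : ∑ m ∈ range M, c m ^ 2 ≤ D := by
    have : ∀ m ∈ range M, c m ^ 2 = (fun x : ℤ => (F x - F (x - 1)) ^ 2) (m : ℤ) := by
      intro m _
      rcases m with _ | m
      -- At `x = 0` the gradient vanishes: `F(0) = F(-1) = f(0)`.
      · simp [hc, hF, symmExt]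
      · have : ((m + 1 : ℕ) : ℤ) - 1 = (m : ℕ) := by push_cast; ring
        simp only [this, hFn]
        simp [hc]
    rw [sum_congr rfl this, ← sum_image (g := fun m : ℕ => (m : ℤ))
      (f := fun x : ℤ => (F x - F (x - 1)) ^ 2) (fun a _ b _ h => by simpa using h)]
    refine sum_le_sum_of_subset_of_nonneg (fun x hx => ?_) fun _ _ _ => sq_nonneg _
    simp only [mem_image, mem_range] at hx
    obtain ⟨k, hk, rfl⟩ := hx
    rw [hS, mem_Icc]; omega
  have hcD' : ∑ n ∈ range M, c' n ^ 2 ≤ D := by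
    have : ∀ m ∈ range M, c' m ^ 2 = (fun x : ℤ => (F x - F (x - 1)) ^ 2) ((m + 1 : ℕ) : ℤ) := by
      intro m _
      have : ((m + 1 : ℕ) : ℤ) - 1 = (m : ℕ) := by push_cast; ring
      simp only [this, hFn, hc']
      ring
    rw [sum_congr rfl this, ← sum_image (g := fun m : ℕ => ((m + 1 : ℕ) : ℤ))
      (f := fun x : ℤ => (F x - F (x - 1)) ^ 2) (fun a _ b _ h => by simpa using h)]
    refine sum_le_sum_of_subset_of_nonneg (fun x hx => ?_) fun _ _ _ => sq_nonneg _
    simp only [mem_image, mem_range] at hx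
    obtain ⟨k, hk, rfl⟩ := hx
    rw [hS, mem_Icc]; omega
  have hzero : ∀ n m, (N + 1 ≤ n ∨ N + 1 ≤ m) → q ![n, m] = 0 := by
    intro n m h
    by_contra hne
    have := hNq _ hne
    simp at this
    omega
  have hbox := box_ineq (fun n m => q ![n, m]) c c' s hs0 M
    (fun m => hzero _ _ (by omega)) (fun n => hzero _ _ (by omega))
  have hdir := dirichlet_ge q (N + 1) hNq
  have hq2 : ∑ᶠ y, q y ^ 2 = ∑ n ∈ range M, ∑ m ∈ range M, q ![n, m] ^ 2 := by
    refine finsum_box _ _ fun y hy => ?_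
    have := hNq y fun h => hy (by simp [h])
    omega
  have hA : ∑ᶠ y, Abar f y * q y
      = ∑ m ∈ range M, c m * q ![0, m] + ∑ n ∈ range M, c' n * q ![n, 0] := by
    rw [finsum_box _ M fun y hy => ?_]
    · have h0M : 0 < M := by omega
      have : ∀ n m, Abar f ![n, m] * q ![n, m]
          = (if n = 0 then c m * q ![0, m] else 0) + (if m = 0 then c' n * q ![n, 0] else 0) := by
        intro n m
        by_cases hn : n = 0 <;> by_cases hm : m = 0 <;> simp [Abar, hn, hm, hc, hc']
      simp_rw [this, sum_add_distrib]
      congr 1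
      · rw [sum_comm]; simp [h0M]
      · simp [h0M]
    · have := hNq y fun h => hy (by simp [h])
      omega
  set I := ∫ t in (-Real.pi)..Real.pi, t ^ 2 * ‖fourierZ F t‖ ^ 2 with hI
  have hDI : D ≤ I := by nlinarith [Real.pi_gt_three]
  have hfin : s⁻¹ * (∑ m ∈ range M, c m ^ 2 + ∑ n ∈ range M, c' n ^ 2) ≤ s⁻¹ * (2 * I) := by
    have := inv_pos.2 hs0
    gcongr
    linarith
  rw [hA, hq2, hpow, ← hs2]
  linarith
end

section
/- There exists a universal constant C < ∞ such that for every λ > 0 and every finitely supported f : ℤ₊² → ℝ with f(x,y) = f(y,x) for all x, y ∈ ℤ₊, one has λ · Σ_{y ∈ ℤ₊²} f(y)² + 𝓔₂(f) ≤ C · ∬_{[−π,π]²} (λ + t₁² + t₂²) |F̂(t₁,t₂)|² dt₁ dt₂, where F : ℤ² → ℝ is the extension F(x,y) = f(|x| − 1_{x<0}, |y| − 1_{y<0}), and F̂(t₁,t₂) = Σ_{(x,y) ∈ ℤ²} F(x,y) e^{i(t₁x + t₂y)}. -/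
/-- The reflection `x ↦ |x| - 1_{x<0}` of `ℤ` onto `ℤ₊`. -/
def foldZ (x : ℤ) : ℕ := (if 0 ≤ x then x else -x - 1).toNat

/-- The reflected extension `F(x,y) = f(|x| - 1_{x<0}, |y| - 1_{y<0})` of `f : ℤ₊² → ℝ`. -/
noncomputable def symmExt₂ (f : (Fin 2 → ℕ) → ℝ) (x y : ℤ) : ℝ :=
  f ![foldZ x, foldZ y]

/-- The Fourier transform `F̂(t₁,t₂) = Σ_{(x,y) ∈ ℤ²} F(x,y) e^{i(t₁x + t₂y)}`. -/
noncomputable def fourierZ₂ (F : ℤ → ℤ → ℝ) (t₁ t₂ : ℝ) : ℂ :=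
  ∑ᶠ p : ℤ × ℤ, (F p.1 p.2 : ℂ) *
    Complex.exp (Complex.I * ((t₁ : ℂ) * (p.1 : ℂ) + (t₂ : ℂ) * (p.2 : ℂ)))

open MeasureTheory

/-! ### Trigonometric polynomials and Parseval's identity -/

/-- The square `[-π, π]²`. -/
def torusBox : Set (ℝ × ℝ) :=
  Set.Icc (-Real.pi) Real.pi ×ˢ Set.Icc (-Real.pi) Real.pi

/-- The character `t ↦ e^{i(t₁ x + t₂ y)}` at `p = (x, y)`. -/
noncomputable def char₂ (p : ℤ × ℤ) (t : ℝ × ℝ) : ℂ :=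
  Complex.exp (Complex.I * ((t.1 : ℂ) * (p.1 : ℂ) + (t.2 : ℂ) * (p.2 : ℂ)))

/-- `fourierZ₂` as a function of pairs. -/
noncomputable def trig (G : ℤ × ℤ → ℝ) (t : ℝ × ℝ) : ℂ :=
  ∑ᶠ p : ℤ × ℤ, (G p : ℂ) * char₂ p t

lemma continuous_char₂ (p : ℤ × ℤ) : Continuous (char₂ p) := by
  unfold char₂; fun_prop

lemma char₂_add (p q : ℤ × ℤ) (t : ℝ × ℝ) : char₂ (p + q) t = char₂ p t * char₂ q t := by
  simp only [char₂, ← Complex.exp_add, Prod.fst_add, Prod.snd_add]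
  push_cast
  ring_nf

lemma conj_char₂ (p : ℤ × ℤ) (t : ℝ × ℝ) :
    (starRingEnd ℂ) (char₂ p t) = char₂ (-p) t := by
  simp only [char₂, ← Complex.exp_conj, Prod.fst_neg, Prod.snd_neg]
  congr 1
  simp
  ring

lemma trig_eq_sum {G : ℤ × ℤ → ℝ} (hG : G.support.Finite) (t : ℝ × ℝ) :
    trig G t = ∑ p ∈ hG.toFinset, (G p : ℂ) * char₂ p t := by
  apply finsum_eq_sum_of_support_subset
  intro p hp
  simp only [Function.mem_support, Set.Finite.coe_toFinset] at hp ⊢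
  intro h
  simp [h] at hp

lemma continuous_trig {G : ℤ × ℤ → ℝ} (hG : G.support.Finite) : Continuous (trig G) := by
  have : trig G = fun t => ∑ p ∈ hG.toFinset, (G p : ℂ) * char₂ p t :=
    funext (trig_eq_sum hG)
  rw [this]
  exact continuous_finsetSum _ fun p _ => continuous_const.mul (continuous_char₂ p)

lemma integrableOn_box {E : Type*} [NormedAddCommGroup E] {g : ℝ × ℝ → E} (hg : Continuous g) :
    IntegrableOn g torusBox :=
  hg.continuousOn.integrableOn_compact (isCompact_Icc.prod isCompact_Icc)

lemma integral_exp_int (n : ℤ) :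
    ∫ t in Set.Icc (-Real.pi) Real.pi, Complex.exp (Complex.I * ((t : ℂ) * (n : ℂ)))
      = if n = 0 then (2 * Real.pi : ℂ) else 0 := by
  rw [integral_Icc_eq_integral_Ioc,
    ← intervalIntegral.integral_of_le (by linarith [Real.pi_pos])]
  split_ifs with h
  · subst h
    simp
    ring
  · have hc : Complex.I * (n : ℂ) ≠ 0 := by simp [h]
    have := integral_exp_mul_complex (a := -Real.pi) (b := Real.pi) hc
    have h2 : ∀ t : ℝ, Complex.exp (Complex.I * ((t : ℂ) * (n : ℂ)))
        = Complex.exp (Complex.I * n * t) := fun t => by congr 1; ring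
    simp only [h2]
    rw [this, div_eq_zero_iff]
    left
    rw [sub_eq_zero, Complex.exp_eq_exp_iff_exists_int]
    exact ⟨n, by push_cast; ring⟩

lemma integral_char₂ (p : ℤ × ℤ) :
    ∫ t in torusBox, char₂ p t = if p = 0 then (4 * Real.pi ^ 2 : ℂ) else 0 := by
  have h : ∀ t : ℝ × ℝ, char₂ p t = Complex.exp (Complex.I * ((t.1 : ℂ) * (p.1 : ℂ))) *
      Complex.exp (Complex.I * ((t.2 : ℂ) * (p.2 : ℂ))) := fun t => by
    rw [← Complex.exp_add, char₂]; congr 1; ring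
  simp only [h, torusBox, Measure.volume_eq_prod]
  rw [setIntegral_prod_mul (fun x : ℝ => Complex.exp (Complex.I * ((x : ℂ) * (p.1 : ℂ))))
    (fun x : ℝ => Complex.exp (Complex.I * ((x : ℂ) * (p.2 : ℂ)))),
    integral_exp_int, integral_exp_int]
  by_cases h1 : p.1 = 0 <;> by_cases h2 : p.2 = 0 <;> simp [h1, h2, Prod.ext_iff]
  ring

/-- Parseval's identity for trigonometric polynomials on the torus. -/
lemma parseval {G : ℤ × ℤ → ℝ} (hG : G.support.Finite) :
    ∫ t in torusBox, ‖trig G t‖ ^ 2 = 4 * Real.pi ^ 2 * ∑' p, G p ^ 2 := by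
  have h1 : ∑' p, G p ^ 2 = ∑ p ∈ hG.toFinset, G p ^ 2 := by
    apply tsum_eq_sum
    intro p hp
    simpa using hp
  have h2 : ∀ t, ((‖trig G t‖ ^ 2 : ℝ) : ℂ) =
      ∑ p ∈ hG.toFinset, ∑ q ∈ hG.toFinset, ((G p : ℂ) * (G q : ℂ)) * char₂ (p + -q) t := by
    intro t
    push_cast
    rw [← Complex.mul_conj', trig_eq_sum hG, map_sum, Finset.sum_mul_sum]
    refine Finset.sum_congr rfl fun p _ => Finset.sum_congr rfl fun q _ => ?_
    rw [map_mul, conj_char₂, char₂_add, Complex.conj_ofReal]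
    ring
  apply Complex.ofReal_injective
  rw [← integral_complex_ofReal]
  simp only [h2]
  have hi : ∀ p q, Integrable (fun t => ((G p : ℂ) * (G q : ℂ)) * char₂ (p + -q) t)
      (volume.restrict torusBox) := fun p q =>
    integrableOn_box (continuous_const.mul (continuous_char₂ _))
  rw [integral_finsetSum _ fun p _ => integrable_finsetSum _ fun q _ => hi p q]
  simp only [integral_finsetSum _ fun q _ => hi _ q, integral_const_mul, integral_char₂]
  rw [h1]
  push_cast
  rw [Finset.mul_sum]
  refine Finset.sum_congr rfl fun p hp => ?_
  rw [Finset.sum_eq_single p]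
  · simp; ring
  · intro q _ hq
    rw [if_neg, mul_zero]
    intro h
    exact hq (by rw [← sub_eq_add_neg, sub_eq_zero] at h; exact h.symm)
  · exact fun h => absurd hp h

/-! ### Fourier energy of differences -/

lemma finite_support_shift {G : ℤ × ℤ → ℝ} (hG : G.support.Finite) (v : ℤ × ℤ) :
    (fun p => G (p + v)).support.Finite :=
  hG.preimage (f := fun p => p + v) (add_left_injective v).injOn

lemma finite_support_diff {G : ℤ × ℤ → ℝ} (hG : G.support.Finite) (v : ℤ × ℤ) :
    (fun p => G (p + v) - G p).support.Finite :=
  ((finite_support_shift hG v).union hG).subset (Function.support_sub _ _)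

lemma trig_diff {G : ℤ × ℤ → ℝ} (hG : G.support.Finite) (v : ℤ × ℤ) (t : ℝ × ℝ) :
    trig (fun p => G (p + v) - G p) t = (char₂ (-v) t - 1) * trig G t := by
  have hfin : ∀ {H : ℤ × ℤ → ℝ}, H.support.Finite →
      (Function.support fun p => (H p : ℂ) * char₂ p t).Finite := fun hH =>
    hH.subset fun p hp h => hp (by simp [h])
  have h1 : trig (fun p => G (p + v)) t = char₂ (-v) t * trig G t := by
    unfold trig
    rw [mul_finsum, ← finsum_comp_equiv (Equiv.addRight v)
      (f := fun p => char₂ (-v) t * ((G p : ℂ) * char₂ p t))]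
    refine finsum_congr fun p => ?_
    rw [Equiv.coe_addRight, mul_left_comm, ← char₂_add, neg_add_cancel_comm_assoc]
  rw [sub_mul, one_mul, ← h1]
  unfold trig
  rw [← finsum_sub_distrib (hfin (finite_support_shift hG v)) (hfin hG)]
  refine finsum_congr fun p => ?_
  push_cast
  ring

lemma norm_char₂_sub_one_le (v : ℤ × ℤ) (t : ℝ × ℝ) :
    ‖char₂ (-v) t - 1‖ ^ 2 ≤ (t.1 * v.1 + t.2 * v.2) ^ 2 := by
  have h : char₂ (-v) t = Complex.exp (Complex.I * ((-(t.1 * v.1 + t.2 * v.2) : ℝ) : ℂ)) := by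
    unfold char₂
    congr 1
    push_cast [Prod.fst_neg, Prod.snd_neg]
    ring
  have := Real.norm_exp_I_mul_ofReal_sub_one_le (x := -(t.1 * v.1 + t.2 * v.2))
  rw [h, ← sq_abs (t.1 * v.1 + t.2 * v.2)]
  rw [norm_neg, Real.norm_eq_abs] at this
  gcongr

/-- The Dirichlet energy of `G` in direction `v` is bounded by its Fourier energy. -/
lemma parseval_diff {G : ℤ × ℤ → ℝ} (hG : G.support.Finite) (v : ℤ × ℤ) :
    4 * Real.pi ^ 2 * ∑' p, (G (p + v) - G p) ^ 2 ≤
      ∫ t in torusBox, (t.1 * v.1 + t.2 * v.2) ^ 2 * ‖trig G t‖ ^ 2 := by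
  rw [← parseval (finite_support_diff hG v)]
  have hc := continuous_trig hG
  have hc' := continuous_trig (finite_support_diff hG v)
  refine setIntegral_mono (integrableOn_box (by fun_prop)) (integrableOn_box (by fun_prop)) ?_
  intro t
  simp only
  rw [trig_diff hG, norm_mul, mul_pow]
  exact mul_le_mul_of_nonneg_right (norm_char₂_sub_one_le v t) (by positivity)

/-! ### The reflected extension and its gradient -/

/-- The reflected extension `symmExt₂ f` as a function of pairs. -/
noncomputable def ext₂ (f : (Fin 2 → ℕ) → ℝ) (p : ℤ × ℤ) : ℝ := symmExt₂ f p.1 p.2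

/-- The inclusion `ℤ₊² → ℤ²`. -/
def incl (y : Fin 2 → ℕ) : ℤ × ℤ := (y 0, y 1)

lemma incl_injective : Function.Injective incl := by
  intro y z h
  simp only [incl, Prod.mk.injEq, Nat.cast_inj] at h
  ext i
  fin_cases i
  · exact h.1
  · exact h.2

lemma foldZ_natCast (n : ℕ) : foldZ n = n := by simp [foldZ]

lemma ext₂_incl (f : (Fin 2 → ℕ) → ℝ) (y : Fin 2 → ℕ) : ext₂ f (incl y) = f y := by
  simp only [ext₂, symmExt₂, incl, foldZ_natCast]
  congr 1
  ext i
  fin_cases i <;> rfl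

lemma finite_support_ext₂ {f : (Fin 2 → ℕ) → ℝ} (hf : f.support.Finite) :
    (ext₂ f).support.Finite := by
  obtain ⟨N, hN⟩ := hf.bddAbove
  refine ((Set.finite_Icc (-(N 0 : ℤ) - 1) (N 0)).prod
    (Set.finite_Icc (-(N 1 : ℤ) - 1) (N 1))).subset ?_
  intro p hp
  have h : ![foldZ p.1, foldZ p.2] ≤ N := hN hp
  have h0 : foldZ p.1 ≤ N 0 := h 0
  have h1 : foldZ p.2 ≤ N 1 := h 1
  simp only [foldZ] at h0 h1
  simp only [Set.mem_prod, Set.mem_Icc]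
  split_ifs at h0 h1 <;> omega

/-- The squared gradient `(F(p + v) - F(p))²` of the reflected extension `F` of `f`. -/
noncomputable def grad (f : (Fin 2 → ℕ) → ℝ) (v p : ℤ × ℤ) : ℝ :=
  (ext₂ f (p + v) - ext₂ f p) ^ 2

lemma summable_grad {f : (Fin 2 → ℕ) → ℝ} (hf : f.support.Finite) (v w : ℤ × ℤ) :
    Summable fun p => grad f v (p + w) := by
  refine summable_of_hasFiniteSupport
    ((finite_support_shift (finite_support_diff (finite_support_ext₂ hf) v) w).subset ?_)
  intro p hp h
  exact hp (by simp only at h; simp [grad, h])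

/-- The edges of `ℤ²` used to dominate all moves out of `p`. The corner of an antidiagonal move
out of `p` is `p - e₁` or `p - e₂`. -/
noncomputable def majorant (f : (Fin 2 → ℕ) → ℝ) (p : ℤ × ℤ) : ℝ :=
  grad f (1, 0) (p + 0) + grad f (0, 1) (p + 0)
    + 3 * grad f (1, 0) (p + (-1, 0)) + 2 * grad f (0, 1) (p + (-1, 0))
    + 2 * grad f (1, 0) (p + (0, -1)) + 3 * grad f (0, 1) (p + (0, -1))

lemma summable_majorant {f : (Fin 2 → ℕ) → ℝ} (hf : f.support.Finite) :
    Summable (majorant f) :=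
  (((((summable_grad hf _ _).add (summable_grad hf _ _)).add
    ((summable_grad hf _ _).mul_left 3)).add ((summable_grad hf _ _).mul_left 2)).add
    ((summable_grad hf _ _).mul_left 2)).add ((summable_grad hf _ _).mul_left 3)

lemma tsum_majorant {f : (Fin 2 → ℕ) → ℝ} (hf : f.support.Finite) :
    ∑' p, majorant f p = 6 * (∑' p, grad f (1, 0) p + ∑' p, grad f (0, 1) p) := by
  have sh : ∀ v w : ℤ × ℤ, HasSum (fun p => grad f v (p + w)) (∑' p, grad f v p) := by
    intro v w
    rw [← (Equiv.addRight w).tsum_eq (grad f v)]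
    exact (summable_grad hf v w).hasSum
  have := ((((((sh (1, 0) 0).add (sh (0, 1) 0)).add
    ((sh (1, 0) (-1, 0)).mul_left 3)).add ((sh (0, 1) (-1, 0)).mul_left 2)).add
    ((sh (1, 0) (0, -1)).mul_left 2)).add ((sh (0, 1) (0, -1)).mul_left 3))
  rw [HasSum.tsum_eq (f := majorant f) this]
  ring

lemma majorant_nonneg (f : (Fin 2 → ℕ) → ℝ) (p : ℤ × ℤ) : 0 ≤ majorant f p := by
  unfold majorant grad; positivity

lemma finite_support_majorant {f : (Fin 2 → ℕ) → ℝ} (hf : f.support.Finite) :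
    (majorant f).support.Finite := by
  have h : ∀ v w : ℤ × ℤ, (fun p => grad f v (p + w)).support.Finite := fun v w =>
    (finite_support_shift (finite_support_diff (finite_support_ext₂ hf) v) w).subset
      fun p hp h => hp (by simp only at h; simp [grad, h])
  refine ((((((h (1, 0) 0).union (h (0, 1) 0)).union (h (1, 0) (-1, 0))).union
    (h (0, 1) (-1, 0))).union (h (1, 0) (0, -1))).union (h (0, 1) (0, -1))).subset ?_
  intro p hp
  by_contra hc
  simp only [Set.mem_union, Function.mem_support, not_or, not_not] at hc
  apply hp
  obtain ⟨⟨⟨⟨⟨h1, h2⟩, h3⟩, h4⟩, h5⟩, h6⟩ := hc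
  rw [majorant, h1, h2, h3, h4, h5, h6]
  norm_num

/-! ### Domination of the exclusion moves -/

/-- The summand of the Dirichlet form at `y`. -/
noncomputable def moves (f : (Fin 2 → ℕ) → ℝ) (y : Fin 2 → ℕ) : ℝ :=
  ∑ j : Fin 3, ∑ ε ∈ ({1, -1} : Finset ℤ),
    (if okMove (ε • stepVec 2 j) y then (f (moveTo (ε • stepVec 2 j) y) - f y) ^ 2 else 0)

lemma moves_nonneg (f : (Fin 2 → ℕ) → ℝ) (y : Fin 2 → ℕ) : 0 ≤ moves f y := by
  unfold moves
  refine Finset.sum_nonneg fun j _ => Finset.sum_nonneg fun ε _ => ?_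
  split_ifs <;> positivity

lemma term_eq (f : (Fin 2 → ℕ) → ℝ) (y : Fin 2 → ℕ) (v : Fin 2 → ℤ) :
    (if okMove v y then (f (moveTo v y) - f y) ^ 2 else 0) =
      if 0 ≤ (y 0 : ℤ) + v 0 ∧ 0 ≤ (y 1 : ℤ) + v 1 then
        (ext₂ f (incl y + (v 0, v 1)) - ext₂ f (incl y)) ^ 2 else 0 := by
  have hiff : okMove v y ↔ 0 ≤ (y 0 : ℤ) + v 0 ∧ 0 ≤ (y 1 : ℤ) + v 1 := by
    simp [okMove, Fin.forall_fin_two]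
  rw [if_congr hiff rfl rfl]
  split_ifs with h
  · have : incl y + (v 0, v 1) = incl (moveTo v y) := by
      simp only [incl, moveTo, Prod.mk_add_mk, Int.toNat_of_nonneg h.1, Int.toNat_of_nonneg h.2]
    rw [this, ext₂_incl, ext₂_incl]
  · rfl

/-- The coordinate moves out of `y` contribute one edge each, and each antidiagonal move at most
twice the two edges through its corner. -/
lemma moves_le (f : (Fin 2 → ℕ) → ℝ) (y : Fin 2 → ℕ) : moves f y ≤ majorant f (incl y) := by
  unfold moves
  simp only [term_eq, Fin.sum_univ_three]
  rw [Finset.sum_pair (by decide), Finset.sum_pair (by decide), Finset.sum_pair (by decide)]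
  have drop : ∀ (P : Prop) [Decidable P] (a : ℝ), (if P then a ^ 2 else 0) ≤ a ^ 2 := by
    intro P _ a
    split_ifs
    · exact le_rfl
    · positivity
  refine (add_le_add (add_le_add (add_le_add (drop _ _) (drop _ _))
    (add_le_add (drop _ _) (drop _ _))) (add_le_add (drop _ _) (drop _ _))).trans ?_
  obtain ⟨a, b⟩ := incl y
  simp [majorant, grad, stepVec, ← sub_eq_add_neg]
  set c := ext₂ f (a, b)
  set l := ext₂ f (a - 1, b)
  set d := ext₂ f (a, b - 1)
  set lu := ext₂ f (a - 1, b + 1)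
  set rd := ext₂ f (a + 1, b - 1)
  -- Each antidiagonal increment is a sum of two edges through the corner `l` or `d`, and
  -- `2x² + 2y² - (x - y)² = (x + y)²`.
  nlinarith [sq_nonneg ((lu - l) + (c - l)), sq_nonneg ((rd - d) + (c - d))]

lemma exclDirichlet_two_le {f : (Fin 2 → ℕ) → ℝ} (hf : f.support.Finite) :
    exclDirichlet 2 f ≤ 3 * (∑' p, grad f (1, 0) p + ∑' p, grad f (0, 1) p) := by
  have hfin : (moves f).support.Finite := by
    refine ((finite_support_majorant hf).preimage incl_injective.injOn).subset ?_
    intro y hy h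
    exact hy (le_antisymm ((moves_le f y).trans_eq h) (moves_nonneg f y))
  have h1 : exclDirichlet 2 f = 1 / 2 * ∑' y, moves f y := by
    rw [tsum_eq_finsum hfin]; rfl
  have h2 : ∑' y, moves f y ≤ ∑' y, majorant f (incl y) :=
    (summable_of_hasFiniteSupport hfin).tsum_le_tsum (moves_le f)
      ((summable_majorant hf).comp_injective incl_injective)
  have h3 : ∑' y, majorant f (incl y) ≤ ∑' p, majorant f p :=
    tsum_comp_le_tsum_of_inj (summable_majorant hf) (majorant_nonneg f) incl_injective
  rw [tsum_majorant hf] at h3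
  linarith

lemma sum_sq_le {f : (Fin 2 → ℕ) → ℝ} (hf : f.support.Finite) :
    ∑ᶠ y, f y ^ 2 ≤ ∑' p, ext₂ f p ^ 2 := by
  have hfin : (fun y => f y ^ 2).support.Finite := hf.subset fun y hy h => hy (by simp [h])
  rw [← tsum_eq_finsum (L := .unconditional _) hfin]
  simp only [← ext₂_incl f]
  refine tsum_comp_le_tsum_of_inj (f := fun p => ext₂ f p ^ 2) ?_ (fun p => sq_nonneg _)
    incl_injective
  exact summable_of_hasFiniteSupport
    ((finite_support_ext₂ hf).subset fun y hy h => hy (by simp [h]))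

/-- **Hard-core removal, Dirichlet form bound (symmetric degree three):**
for symmetric finitely supported `f : ℤ₊² → ℝ`,
`λ‖f‖² + 𝓔₂(f) ≤ C ∬_{[-π,π]²} (λ + t₁² + t₂²)|F̂(t₁,t₂)|² dt₁ dt₂`. -/
theorem dirichlet_bound_by_fourier_energy_degree_three :
    ∃ C : ℝ, ∀ lam : ℝ, 0 < lam →
      ∀ f : (Fin 2 → ℕ) → ℝ, (Function.support f).Finite →
        (∀ a b : ℕ, f ![a, b] = f ![b, a]) →
        lam * ∑ᶠ y : Fin 2 → ℕ, (f y) ^ 2 + exclDirichlet 2 f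
          ≤ C * ∫ p in (Set.Icc (-Real.pi) Real.pi ×ˢ Set.Icc (-Real.pi) Real.pi : Set (ℝ × ℝ)),
              (lam + p.1 ^ 2 + p.2 ^ 2) * ‖fourierZ₂ (symmExt₂ f) p.1 p.2‖ ^ 2 := by
  refine ⟨3 / (4 * Real.pi ^ 2), fun lam hlam f hf _ => ?_⟩
  have hF := finite_support_ext₂ hf
  have hc := continuous_trig hF
  have hs := sum_sq_le hf
  have hE := exclDirichlet_two_le hf
  have p0 := parseval hF
  have p1 := parseval_diff hF (1, 0)
  have p2 := parseval_diff hF (0, 1)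
  simp only [Int.cast_one, Int.cast_zero, mul_one, mul_zero, add_zero, zero_add] at p1 p2
  have hI : ∫ t in torusBox, (lam + t.1 ^ 2 + t.2 ^ 2) * ‖trig (ext₂ f) t‖ ^ 2 =
      lam * (∫ t in torusBox, ‖trig (ext₂ f) t‖ ^ 2)
        + (∫ t in torusBox, t.1 ^ 2 * ‖trig (ext₂ f) t‖ ^ 2)
        + ∫ t in torusBox, t.2 ^ 2 * ‖trig (ext₂ f) t‖ ^ 2 := by
    rw [← integral_const_mul, ← integral_add, ← integral_add]
    · congr 1; ext t; ring
    all_goals exact integrableOn_box (by fun_prop)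
  change _ ≤ 3 / (4 * Real.pi ^ 2) *
    ∫ t in torusBox, (lam + t.1 ^ 2 + t.2 ^ 2) * ‖trig (ext₂ f) t‖ ^ 2
  have hpi : (0 : ℝ) < 4 * Real.pi ^ 2 := by positivity
  have hS : 0 ≤ ∑' p, ext₂ f p ^ 2 := tsum_nonneg fun p => sq_nonneg _
  rw [div_mul_eq_mul_div, le_div_iff₀ hpi, hI, p0]
  change 4 * Real.pi ^ 2 * ∑' p, grad f (1, 0) p ≤ _ at p1
  change 4 * Real.pi ^ 2 * ∑' p, grad f (0, 1) p ≤ _ at p2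
  have k1 := mul_le_mul_of_nonneg_left hs hlam.le
  have k2 := mul_le_mul_of_nonneg_right (add_le_add k1 hE) hpi.le
  have k3 : 0 ≤ lam * (∑' p, ext₂ f p ^ 2) * (4 * Real.pi ^ 2) := by positivity
  linarith
end

section
/- There exist universal constants 0 < c ≤ C < ∞ such that for all real numbers a, b with a² + b² = 1 and every λ ∈ (0, 1/e): c · (log(1/λ))^{1/2} ≤ ∬_{{(t₁,t₂) : t₁² + t₂² ≤ 1/2}} dt₁ dt₂ / ( λ + (b t₁ − a t₂)² + log(1/λ) · (a t₁ + b t₂)² ) ≤ C · (log(1/λ))^{1/2}. -/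
/-!
Write `L = log (1 / λ) > 1`. The rotation `u = b t₁ - a t₂`,
`v = a t₁ + b t₂` reduces the integrand to `1 / (λ + u² + L v²)`, with the
disk unchanged. The disk of radius `1 / √2` contains the square `[-1/2, 1/2]²` and lies in
`[-1, 1]²`, and over `[-R, R]²` both one-dimensional integrals are explicit (`integral_vertical`,
`integral_horizontal`): integrating in `v` gives
`2 arctan (√L R / √(λ + u²)) / (√L √(λ + u²))`, where the arctangent lies between `arctan (1/2)`
(for `R = 1/2`) and `π / 2`, and integrating `1 / √(λ + u²)` over `[-R, R]` gives
`2 log (R + √(λ + R²)) + L`, which lies between `L` (for `R = 1/2`) and `5 L` (for `R = 1`).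
The quotient `L / √L` is the claimed `√L`.
-/

open MeasureTheory

lemma continuous_kernel {lam L : ℝ} (hlam : 0 < lam) (hL : 0 < L) :
    Continuous fun p : ℝ × ℝ => (lam + p.1 ^ 2 + L * p.2 ^ 2)⁻¹ := by
  refine Continuous.inv₀ (by fun_prop) fun p => ?_
  positivity

/-- The integral over the disk does not see the drift direction: the map
`(t₁, t₂) ↦ (b t₁ - a t₂, a t₁ + b t₂)` is orthogonal with determinant `1`,
so it preserves both Lebesgue measure and the disk. -/
lemma integral_disk_rotate {a b : ℝ} (hab : a ^ 2 + b ^ 2 = 1) (lam L : ℝ) :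
    (∫ p in {p : ℝ × ℝ | p.1 ^ 2 + p.2 ^ 2 ≤ 1 / 2},
        (lam + (b * p.1 - a * p.2) ^ 2 + L * (a * p.1 + b * p.2) ^ 2)⁻¹)
      = ∫ p in {p : ℝ × ℝ | p.1 ^ 2 + p.2 ^ 2 ≤ 1 / 2},
        (lam + p.1 ^ 2 + L * p.2 ^ 2)⁻¹ := by
  set T : ℝ × ℝ →ₗ[ℝ] ℝ × ℝ :=
    Matrix.toLin (Module.Basis.finTwoProd ℝ) (Module.Basis.finTwoProd ℝ) !![b, -a; a, b] with hT
  have hTapp : ∀ p : ℝ × ℝ, T p = (b * p.1 - a * p.2, a * p.1 + b * p.2) := by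
    intro p
    rw [hT, Matrix.toLin_finTwoProd_apply]
    simp [sub_eq_add_neg]
  have hdet : LinearMap.det T = 1 := by
    rw [hT, LinearMap.det_toLin, Matrix.det_fin_two_of]
    linarith
  have hcont : Continuous T := T.continuous_of_finiteDimensional
  have hinj : Function.Injective T :=
    (LinearMap.equivOfDetNeZero T (by rw [hdet]; exact one_ne_zero)).injective
  have hmp : MeasurePreserving T volume volume := by
    refine ⟨hcont.measurable, ?_⟩
    rw [Measure.map_linearMap_addHaar_eq_smul_addHaar volume (by rw [hdet]; exact one_ne_zero), hdet]
    simp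
  have hpre : T ⁻¹' {p : ℝ × ℝ | p.1 ^ 2 + p.2 ^ 2 ≤ 1 / 2}
      = {p : ℝ × ℝ | p.1 ^ 2 + p.2 ^ 2 ≤ 1 / 2} := by
    ext p
    have h : (b * p.1 - a * p.2) ^ 2 + (a * p.1 + b * p.2) ^ 2 = p.1 ^ 2 + p.2 ^ 2 := by
      linear_combination (p.1 ^ 2 + p.2 ^ 2) * hab
    simp only [Set.mem_preimage, Set.mem_ofPred_eq, hTapp, h]
  have key := hmp.setIntegral_preimage_emb (hcont.measurableEmbedding hinj)
    (fun p : ℝ × ℝ => (lam + p.1 ^ 2 + L * p.2 ^ 2)⁻¹) {p : ℝ × ℝ | p.1 ^ 2 + p.2 ^ 2 ≤ 1 / 2}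
  rw [hpre] at key
  simpa only [hTapp] using key

lemma integral_vertical {A L : ℝ} (hA : 0 < A) (hL : 0 < L) (R : ℝ) :
    ∫ v in (-R)..R, (A + L * v ^ 2)⁻¹
      = 2 * Real.arctan (√L / √A * R) * (√L)⁻¹ * (√A)⁻¹ := by
  have hsA : 0 < √A := Real.sqrt_pos.2 hA
  have hsL : 0 < √L := Real.sqrt_pos.2 hL
  have hd : ∀ v ∈ Set.uIcc (-R) R,
      HasDerivAt (fun v : ℝ => Real.arctan (√L / √A * v) * (√L)⁻¹ * (√A)⁻¹)
        (A + L * v ^ 2)⁻¹ v := by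
    intro v _
    have h1 := (((hasDerivAt_id v).const_mul (√L / √A)).arctan.mul_const (√L)⁻¹).mul_const (√A)⁻¹
    refine h1.congr_deriv ?_
    have h2 : A = √A ^ 2 := (Real.sq_sqrt hA.le).symm
    have h3 : L = √L ^ 2 := (Real.sq_sqrt hL.le).symm
    have h4 : (A + L * v ^ 2)⁻¹ = (√A ^ 2 + √L ^ 2 * v ^ 2)⁻¹ := by rw [← h2, ← h3]
    rw [h4]
    simp only [id]
    field_simp
  have hc : Continuous fun v : ℝ => (A + L * v ^ 2)⁻¹ :=
    Continuous.inv₀ (by fun_prop) fun v => by positivity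
  rw [intervalIntegral.integral_eq_sub_of_hasDerivAt hd (hc.intervalIntegrable _ _),
    mul_neg, Real.arctan_neg]
  ring

lemma continuous_inv_sqrt {lam : ℝ} (hlam : 0 < lam) :
    Continuous fun u : ℝ => (√(lam + u ^ 2))⁻¹ :=
  Continuous.inv₀ (by fun_prop) fun u => by positivity

lemma integral_horizontal {lam : ℝ} (hlam : 0 < lam) (R : ℝ) :
    ∫ u in (-R)..R, (√(lam + u ^ 2))⁻¹
      = 2 * Real.log (R + √(lam + R ^ 2)) - Real.log lam := by
  have hpos : ∀ u : ℝ, 0 < u + √(lam + u ^ 2) := by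
    intro u
    have h : |u| < √(lam + u ^ 2) := by
      rw [← Real.sqrt_sq_eq_abs]
      exact Real.sqrt_lt_sqrt (sq_nonneg u) (by linarith)
    linarith [neg_abs_le u]
  have hd : ∀ u ∈ Set.uIcc (-R) R,
      HasDerivAt (fun u : ℝ => Real.log (u + √(lam + u ^ 2))) (√(lam + u ^ 2))⁻¹ u := by
    intro u _
    have hq : 0 < lam + u ^ 2 := by positivity
    have h1 := ((hasDerivAt_id u).add
      ((((hasDerivAt_id u).pow 2).const_add lam).sqrt hq.ne')).log (hpos u).ne'
    refine h1.congr_deriv ?_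
    have hs : 0 < √(lam + u ^ 2) := Real.sqrt_pos.2 hq
    have hp := hpos u
    simp only [id, Pi.add_apply, Pi.pow_apply]
    rw [inv_eq_one_div, div_eq_div_iff hp.ne' hs.ne']
    field_simp
    norm_num
    ring
  rw [intervalIntegral.integral_eq_sub_of_hasDerivAt hd
    ((continuous_inv_sqrt hlam).intervalIntegrable _ _)]
  -- The two endpoint values multiply to `lam`, as conjugates.
  have hprod : Real.log (R + √(lam + R ^ 2)) + Real.log (-R + √(lam + (-R) ^ 2))
      = Real.log lam := by
    rw [← Real.log_mul (hpos R).ne' (hpos (-R)).ne', neg_sq]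
    congr 1
    have := Real.sq_sqrt (show 0 ≤ lam + R ^ 2 by positivity)
    linear_combination this
  linarith

lemma integral_box {lam L R : ℝ} (hlam : 0 < lam) (hL : 0 < L) (hR : 0 ≤ R) :
    ∫ p in Set.Icc (-R) R ×ˢ Set.Icc (-R) R, (lam + p.1 ^ 2 + L * p.2 ^ 2)⁻¹
      = ∫ u in (-R)..R,
          2 * Real.arctan (√L / √(lam + u ^ 2) * R) * (√L)⁻¹ * (√(lam + u ^ 2))⁻¹ := by
  have hint : IntegrableOn (fun p : ℝ × ℝ => (lam + p.1 ^ 2 + L * p.2 ^ 2)⁻¹)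
      (Set.Icc (-R) R ×ˢ Set.Icc (-R) R) (volume.prod volume) :=
    (continuous_kernel hlam hL).continuousOn.integrableOn_compact (isCompact_Icc.prod isCompact_Icc)
  have hRR : -R ≤ R := by linarith
  rw [Measure.volume_eq_prod, setIntegral_prod _ hint, integral_Icc_eq_integral_Ioc,
    ← intervalIntegral.integral_of_le hRR]
  refine intervalIntegral.integral_congr fun u _ => ?_
  have hA : 0 < lam + u ^ 2 := by positivity
  rw [← integral_vertical hA hL R, intervalIntegral.integral_of_le hRR, integral_Icc_eq_integral_Ioc]


/-- **Integral asymptotics of the two-dimensional test function:** for a unit drift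
direction `(a,b)` and `λ ∈ (0, 1/e)`,
`∬_{t₁²+t₂² ≤ 1/2} dt / (λ + (bt₁ - at₂)² + log(1/λ)(at₁ + bt₂)²) ≍ (log(1/λ))^{1/2}`
with universal constants. -/
theorem two_dim_test_function_integral_asymptotics :
    ∃ c C : ℝ, 0 < c ∧ c ≤ C ∧
      ∀ a b : ℝ, a ^ 2 + b ^ 2 = 1 →
        ∀ lam : ℝ, lam ∈ Set.Ioo 0 (Real.exp (-1)) →
          (c * Real.sqrt (Real.log (1 / lam))
              ≤ ∫ p in {p : ℝ × ℝ | p.1 ^ 2 + p.2 ^ 2 ≤ 1 / 2},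
                  (lam + (b * p.1 - a * p.2) ^ 2
                    + Real.log (1 / lam) * (a * p.1 + b * p.2) ^ 2)⁻¹) ∧
          ((∫ p in {p : ℝ × ℝ | p.1 ^ 2 + p.2 ^ 2 ≤ 1 / 2},
                  (lam + (b * p.1 - a * p.2) ^ 2
                    + Real.log (1 / lam) * (a * p.1 + b * p.2) ^ 2)⁻¹)
              ≤ C * Real.sqrt (Real.log (1 / lam))) := by
  refine ⟨2 * Real.arctan (1 / 2), 5 * Real.pi, ?_, ?_, ?_⟩
  · have := Real.arctan_pos.2 (show (0 : ℝ) < 1 / 2 by norm_num)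
    linarith
  · linarith [Real.arctan_lt_pi_div_two (1 / 2), Real.pi_pos]
  intro a b hab lam ⟨hlam, hlam'⟩
  rw [integral_disk_rotate hab]
  have hlog : Real.log lam = -Real.log (1 / lam) := by rw [one_div, Real.log_inv, neg_neg]
  set L := Real.log (1 / lam) with hLdef
  have hL1 : 1 < L := by
    have : Real.log lam < -1 := (Real.log_lt_iff_lt_exp hlam).2 hlam'
    linarith
  have hL : 0 < L := by linarith
  have hlam1 : lam < 1 / 2 := by
    have h1 : Real.exp (-1) ≤ 1 / 2 := by
      rw [Real.exp_neg, inv_eq_one_div]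
      exact one_div_le_one_div_of_le two_pos (by linarith [Real.add_one_le_exp (1 : ℝ)])
    linarith
  have hsL : 0 < √L := Real.sqrt_pos.2 hL
  have hLL : (√L)⁻¹ * L = √L := by
    rw [inv_mul_eq_div, Real.div_sqrt]
  have hf := continuous_kernel hlam hL
  have hnn : ∀ p : ℝ × ℝ, 0 ≤ (lam + p.1 ^ 2 + L * p.2 ^ 2)⁻¹ := fun p => by positivity
  have hbox : ∀ R : ℝ, IntegrableOn (fun p : ℝ × ℝ => (lam + p.1 ^ 2 + L * p.2 ^ 2)⁻¹)
      (Set.Icc (-R) R ×ˢ Set.Icc (-R) R) := fun R =>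
    hf.continuousOn.integrableOn_compact (isCompact_Icc.prod isCompact_Icc)
  have hsub₁ : Set.Icc (-(1 / 2) : ℝ) (1 / 2) ×ˢ Set.Icc (-(1 / 2) : ℝ) (1 / 2)
      ⊆ {p : ℝ × ℝ | p.1 ^ 2 + p.2 ^ 2 ≤ 1 / 2} := by
    rintro ⟨u, v⟩ ⟨⟨hu1, hu2⟩, ⟨hv1, hv2⟩⟩
    simp only [Set.mem_ofPred_eq] at *
    nlinarith
  have hsub₂ : {p : ℝ × ℝ | p.1 ^ 2 + p.2 ^ 2 ≤ 1 / 2}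
      ⊆ Set.Icc (-1 : ℝ) 1 ×ˢ Set.Icc (-1 : ℝ) 1 := by
    rintro ⟨u, v⟩ h
    simp only [Set.mem_ofPred_eq] at h
    refine ⟨⟨?_, ?_⟩, ⟨?_, ?_⟩⟩ <;> simp only <;> nlinarith [sq_nonneg u, sq_nonneg v]
  have hcont : ∀ R : ℝ, Continuous fun u : ℝ =>
      2 * Real.arctan (√L / √(lam + u ^ 2) * R) * (√L)⁻¹ * (√(lam + u ^ 2))⁻¹ := by
    intro R
    have h := continuous_inv_sqrt hlam
    simp only [div_eq_mul_inv]
    exact (((Real.continuous_arctan.comp ((h.const_mul _).mul_const R)).const_mul 2).mul_const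
      _).mul h
  constructor
  · have h1 := setIntegral_mono_set ((hbox 1).mono_set hsub₂)
      (Filter.Eventually.of_forall hnn) hsub₁.eventuallyLE
    refine le_trans ?_ h1
    rw [integral_box hlam hL (by norm_num)]
    have h2 : ∫ u in (-(1 / 2) : ℝ)..(1 / 2),
          2 * Real.arctan (1 / 2) * (√L)⁻¹ * (√(lam + u ^ 2))⁻¹
        ≤ ∫ u in (-(1 / 2) : ℝ)..(1 / 2),
          2 * Real.arctan (√L / √(lam + u ^ 2) * (1 / 2)) * (√L)⁻¹ * (√(lam + u ^ 2))⁻¹ := by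
      refine intervalIntegral.integral_mono_on (by norm_num)
        (((continuous_inv_sqrt hlam).const_mul _).intervalIntegrable _ _)
        ((hcont _).intervalIntegrable _ _) ?_
      intro u ⟨hu1, hu2⟩
      have hA : 0 < lam + u ^ 2 := by positivity
      -- Here `lam + u ^ 2 ≤ 1 ≤ L`, which keeps the argument of the arctangent above `1 / 2`.
      have hq : 1 ≤ √L / √(lam + u ^ 2) := by
        rw [one_le_div (Real.sqrt_pos.2 hA)]
        exact Real.sqrt_le_sqrt (by nlinarith)
      have := Real.arctan_strictMono.monotone
        (show 1 / 2 ≤ √L / √(lam + u ^ 2) * (1 / 2) by linarith)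
      gcongr
    refine le_trans ?_ h2
    rw [intervalIntegral.integral_const_mul, integral_horizontal hlam]
    have h3 : 0 ≤ Real.log (1 / 2 + √(lam + (1 / 2) ^ 2)) := by
      refine Real.log_nonneg ?_
      have : 1 / 2 ≤ √(lam + (1 / 2) ^ 2) := Real.le_sqrt_of_sq_le (by linarith)
      linarith
    have hat : 0 ≤ Real.arctan (1 / 2) := (Real.arctan_pos.2 (by norm_num)).le
    calc 2 * Real.arctan (1 / 2) * √L
        = 2 * Real.arctan (1 / 2) * (√L)⁻¹ * L := by rw [mul_assoc _ (√L)⁻¹, hLL]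
      _ ≤ _ := by
        gcongr
        linarith
  · have h1 := setIntegral_mono_set (hbox 1)
      (Filter.Eventually.of_forall hnn) hsub₂.eventuallyLE
    refine h1.trans ?_
    rw [integral_box hlam hL zero_le_one]
    have h2 : ∫ u in (-1 : ℝ)..1,
          2 * Real.arctan (√L / √(lam + u ^ 2) * 1) * (√L)⁻¹ * (√(lam + u ^ 2))⁻¹
        ≤ ∫ u in (-1 : ℝ)..1, Real.pi * (√L)⁻¹ * (√(lam + u ^ 2))⁻¹ := by
      refine intervalIntegral.integral_mono_on (by norm_num)
        ((hcont _).intervalIntegrable _ _)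
        (((continuous_inv_sqrt hlam).const_mul _).intervalIntegrable _ _) ?_
      intro u _
      have := Real.arctan_lt_pi_div_two (√L / √(lam + u ^ 2) * 1)
      gcongr
      linarith
    refine h2.trans ?_
    rw [intervalIntegral.integral_const_mul, integral_horizontal hlam]
    have hs : √(lam + 1 ^ 2) ≤ 2 := Real.sqrt_le_iff.2 ⟨by norm_num, by linarith⟩
    have h3 : Real.log (1 + √(lam + 1 ^ 2)) ≤ 2 := by
      have := Real.log_le_sub_one_of_pos (show 0 < 1 + √(lam + 1 ^ 2) by positivity)
      linarith
    calc Real.pi * (√L)⁻¹ * (2 * Real.log (1 + √(lam + 1 ^ 2)) - Real.log lam)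
        ≤ Real.pi * (√L)⁻¹ * (5 * L) := by
          have := Real.pi_pos
          gcongr
          linarith
      _ = 5 * Real.pi * √L := by
          linear_combination 5 * Real.pi * hLL
end
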